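/- There exist δ₀(n) > 0 and a constant c = c(n) > 0 such that for every convex body K with (1 − δ)Δ_n ⊂ K ⊂ Δ_n for some 0 < δ < δ₀(n), one has vol(K^{s(K)}) ≥ vol(K°)·(1 − cδ²); consequently P(K) = vol(K)·vol(K^{s(K)}) ≥ vol(K)·vol(K°)·(1 − cδ²). -/

import Mathlib

/-!
For `z` in the interior of `K`, the projective map `y ↦ y / (1 - ⟪z, y⟫)` carries `K°` into
`K^z` (in fact onto it) with Jacobian `(1 - ⟪z, y⟫)^{-(n+1)}`, so
`vol(K^z) ≥ ∫_{K°} (1 - ⟪z, y⟫)^{-(n+1)} dy` (`setIntegral_le_volume_polarAt`). A second-order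
Bernoulli inequality (`bernoulli_inv`) bounds the integrand below by
`1 + (n+1)⟪z, y⟫ + a⟪z, y⟫²` with `a > 0` depending only on `n`.

The linear term integrates to at least `-A δ‖z‖` (`first_moment_lower`): the centroid of `Δ°` is
the origin by symmetry (`IsRegularSimplex.first_moment`), and `Δ° ⊆ K° ⊆ (1 - δ)⁻¹ Δ°`. The
quadratic term integrates to at least `B‖z‖²` (`second_moment_lower`), since `K° ⊇ Δ°` contains
the unit ball. Completing the square in `‖z‖` gives `vol(K^z) ≥ vol(K°) - A²δ²/(4B)` for every
interior point `z`, without locating the Santaló point; minimality of `z` is needed only to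
identify the volume product.
-/


open MeasureTheory Metric Set Pointwise RealInnerProductSpace

noncomputable section

abbrev Euc (n : ℕ) : Type := EuclideanSpace ℝ (Fin n)

/-- A convex body: a compact convex set with nonempty interior. -/
def IsConvexBody {n : ℕ} (K : Set (Euc n)) : Prop :=
  IsCompact K ∧ Convex ℝ K ∧ (interior K).Nonempty

/-- The polar body of `K` with center of polarity `z`. -/
def polarAt {n : ℕ} (K : Set (Euc n)) (z : Euc n) : Set (Euc n) :=
  {y | ∀ x ∈ K, ⟪y, x - z⟫ ≤ 1}

/-- `z` is the Santaló point of `K`: the interior point minimizing the volume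
of the polar body `K^z`. -/
def IsSantaloPoint {n : ℕ} (K : Set (Euc n)) (z : Euc n) : Prop :=
  z ∈ interior K ∧ ∀ w ∈ interior K, volume (polarAt K z) ≤ volume (polarAt K w)

/-- `v` lists the vertices of a regular simplex inscribed in the unit sphere:
unit vectors with pairwise inner products `−1/n`. -/
def IsRegularSimplex {n : ℕ} (v : Fin (n + 1) → Euc n) : Prop :=
  (∀ i, ‖v i‖ = 1) ∧ ∀ i j, i ≠ j → ⟪v i, v j⟫ = -(1 / (n : ℝ))

/-- The simplex with vertex set `v`. -/
def simplexHull {n : ℕ} (v : Fin (n + 1) → Euc n) : Set (Euc n) :=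
  convexHull ℝ (Set.range v)

/-- The face of the simplex spanned by the vertices indexed by `s`. -/
def faceOf {n : ℕ} (v : Fin (n + 1) → Euc n) (s : Finset (Fin (n + 1))) : Set (Euc n) :=
  convexHull ℝ (v '' ↑s)

/-- The centroid of the face spanned by the vertices indexed by `s`. -/
def centroidOf {n : ℕ} (v : Fin (n + 1) → Euc n) (s : Finset (Fin (n + 1))) : Euc n :=
  (s.card : ℝ)⁻¹ • ∑ i ∈ s, v i

/-- `F^⊥ = {y : ⟨x, y⟩ = 0 for all x ∈ F}`. -/
def perpOf {n : ℕ} (F : Set (Euc n)) : Set (Euc n) :=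
  {y | ∀ x ∈ F, ⟪x, y⟫ = 0}

/-- The dual face `F^* = {y ∈ Δₙ° : ⟨x, y⟩ = 1 for all x ∈ F}` of the face of the
simplex indexed by `s`. -/
def dualFace {n : ℕ} (v : Fin (n + 1) → Euc n) (s : Finset (Fin (n + 1))) : Set (Euc n) :=
  {y ∈ polarAt (simplexHull v) 0 | ∀ x ∈ faceOf v s, ⟪x, y⟫ = 1}

/-- The centroid `c_{F^*} = c_F / ‖c_F‖²` of the dual face. -/
def dualCentroid {n : ℕ} (v : Fin (n + 1) → Euc n) (s : Finset (Fin (n + 1))) : Euc n :=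
  (‖centroidOf v s‖ ^ 2)⁻¹ • centroidOf v s

/-- `x` is a tangency point of the family of affine subspaces `t'·c + F^⊥` with the
body `K`: the parameter `t` is maximal so that `t·c + F^⊥` meets `K`, and
`x ∈ (t·c + F^⊥) ∩ ∂K`. -/
def IsTangency {n : ℕ} (F : Set (Euc n)) (c : Euc n) (K : Set (Euc n))
    (t : ℝ) (x : Euc n) : Prop :=
  0 < t ∧ x ∈ frontier K ∧ x ∈ (t • c) +ᵥ perpOf F ∧
    ∀ t' : ℝ, (((t' • c) +ᵥ perpOf F) ∩ K).Nonempty → t' ≤ t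

/-- The volume product `P(K) = inf {vol K · vol K^z : z ∈ int K}`. -/
def volProd {n : ℕ} (K : Set (Euc n)) : ℝ :=
  sInf ((fun z => (volume K).toReal * (volume (polarAt K z)).toReal) '' interior K)

/-! ### Polar bodies -/

theorem mem_polarAt_zero {n : ℕ} {K : Set (Euc n)} {y : Euc n} :
    y ∈ polarAt K 0 ↔ ∀ x ∈ K, ⟪y, x⟫ ≤ 1 := by
  simp [polarAt]

theorem isClosed_polarAt {n : ℕ} (K : Set (Euc n)) (z : Euc n) : IsClosed (polarAt K z) := by
  have : polarAt K z = ⋂ x ∈ K, {y | ⟪y, x - z⟫ ≤ 1} := by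
    ext y; simp [polarAt]
  rw [this]
  exact isClosed_biInter fun x _ => isClosed_le (by fun_prop) continuous_const

theorem isBounded_polarAt {n : ℕ} {K : Set (Euc n)} {z : Euc n} (hz : z ∈ interior K) :
    Bornology.IsBounded (polarAt K z) := by
  obtain ⟨ε, hε, hb⟩ := Metric.mem_nhds_iff.1 (mem_interior_iff_mem_nhds.1 hz)
  refine (Metric.isBounded_closedBall (x := (0 : Euc n)) (r := 2 / ε)).subset fun y hy => ?_
  rw [mem_closedBall_zero_iff]
  by_cases h0 : y = 0
  · subst h0; simp; positivity
  have hy0 : 0 < ‖y‖ := norm_pos_iff.2 h0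
  have hmem : z + (ε / 2 / ‖y‖) • y ∈ K := by
    apply hb
    rw [mem_ball, dist_eq_norm, add_sub_cancel_left, norm_smul, Real.norm_of_nonneg (by positivity)]
    field_simp
    linarith
  have := hy _ hmem
  rw [add_sub_cancel_left, inner_smul_right, real_inner_self_eq_norm_sq] at this
  rw [le_div_iff₀ hε]
  field_simp at this
  linarith

theorem inner_lt_one_of_mem_polarAt {n : ℕ} {K : Set (Euc n)} {z y : Euc n}
    (hz : z ∈ interior K) (hy : y ∈ polarAt K 0) : ⟪z, y⟫ < 1 := by
  rw [mem_polarAt_zero] at hy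
  by_cases h0 : y = 0
  · subst h0; simp
  have hy0 : 0 < ‖y‖ := norm_pos_iff.2 h0
  have hc : Filter.Tendsto (fun t : ℝ => z + t • y) (nhdsWithin 0 (Ioi 0)) (nhds z) := by
    have : Continuous (fun t : ℝ => z + t • y) := by fun_prop
    simpa using (this.tendsto 0).mono_left nhdsWithin_le_nhds
  have h1 := hc.eventually (mem_interior_iff_mem_nhds.1 hz)
  obtain ⟨t, ht, htpos⟩ := (h1.and self_mem_nhdsWithin).exists
  have h2 := hy _ ht
  rw [inner_add_right, inner_smul_right, real_inner_self_eq_norm_sq, real_inner_comm] at h2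
  have : 0 < t * ‖y‖ ^ 2 := mul_pos htpos (by positivity)
  linarith

/-! ### The projective change of variables -/

/-- The derivative at `y` of the projective map `y ↦ y / (1 - ⟪z, y⟫)`. -/
def projDeriv {n : ℕ} (z y : Euc n) : Euc n →L[ℝ] Euc n :=
  (1 - ⟪z, y⟫)⁻¹ • ContinuousLinearMap.id ℝ (Euc n) +
    ((1 - ⟪z, y⟫) ^ 2)⁻¹ • (innerSL ℝ z).smulRight y

theorem hasFDerivAt_proj {n : ℕ} {z y : Euc n} (h : ⟪z, y⟫ < 1) :
    HasFDerivAt (fun y : Euc n => (1 - ⟪z, y⟫)⁻¹ • y) (projDeriv z y) y := by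
  have hs : (1 - ⟪z, y⟫) ≠ 0 := by linarith
  have h1 : HasFDerivAt (fun y : Euc n => 1 - ⟪z, y⟫) (-(innerSL ℝ z)) y := by
    simpa using ((innerSL ℝ z).hasFDerivAt (x := y)).const_sub 1
  have h2 := ((hasDerivAt_inv hs).comp_hasFDerivAt y h1).smul (hasFDerivAt_id y)
  refine h2.congr_fderiv ?_
  ext w i
  simp [projDeriv]
  ring

/-- The Jacobian determinant of the projective map, via the determinant of a rank-one
perturbation of the identity. -/
theorem det_projDeriv {n : ℕ} {z y : Euc n} (h : ⟪z, y⟫ < 1) :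
    (projDeriv z y).det = ((1 - ⟪z, y⟫)⁻¹) ^ (n + 1) := by
  have hs : (1 - ⟪z, y⟫) ≠ 0 := by linarith
  have : ((projDeriv z y : Euc n →L[ℝ] Euc n) : Euc n →ₗ[ℝ] Euc n) =
      (1 - ⟪z, y⟫)⁻¹ • LinearMap.transvection
        ((innerSL ℝ z : Euc n →L[ℝ] ℝ) : Euc n →ₗ[ℝ] ℝ) ((1 - ⟪z, y⟫)⁻¹ • y) := by
    ext w i
    simp [projDeriv, LinearMap.transvection.apply]
    field_simp
  rw [ContinuousLinearMap.det, this, LinearMap.det_smul, LinearMap.transvection.det]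
  simp
  field_simp
  ring

/-- The projective map `y ↦ y / (1 - ⟪z, y⟫)` sends `K°` injectively into `K^z`, so that
`vol(K^z) ≥ ∫_{K°} (1 - ⟪z, y⟫)^{-(n+1)} dy`; any integrable minorant of the integrand
gives a lower bound. -/
theorem setIntegral_le_volume_polarAt {n : ℕ} {K : Set (Euc n)} {z : Euc n}
    (hz : z ∈ interior K) (q : Euc n → ℝ) (hq : IntegrableOn q (polarAt K 0))
    (hle : ∀ y ∈ polarAt K 0, q y ≤ ((1 - ⟪z, y⟫)⁻¹) ^ (n + 1)) :
    ∫ y in polarAt K 0, q y ≤ (volume (polarAt K z)).toReal := by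
  have hm : MeasurableSet (polarAt K 0) := (isClosed_polarAt K 0).measurableSet
  have hlt : ∀ y ∈ polarAt K 0, ⟪z, y⟫ < 1 := fun y hy => inner_lt_one_of_mem_polarAt hz hy
  have hf : ∀ y ∈ polarAt K 0,
      HasFDerivWithinAt (fun y : Euc n => (1 - ⟪z, y⟫)⁻¹ • y) (projDeriv z y) (polarAt K 0) y :=
    fun y hy => (hasFDerivAt_proj (hlt y hy)).hasFDerivWithinAt
  have hinj : InjOn (fun y : Euc n => (1 - ⟪z, y⟫)⁻¹ • y) (polarAt K 0) := by
    intro y hy y' hy' he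
    have hs : 0 < 1 - ⟪z, y⟫ := by linarith [hlt y hy]
    have hs' : 0 < 1 - ⟪z, y'⟫ := by linarith [hlt y' hy']
    have he1 := congrArg (fun w => ⟪z, w⟫) he
    simp only [inner_smul_right] at he1
    have he2 : ⟪z, y⟫ = ⟪z, y'⟫ := by
      field_simp at he1
      linarith
    simp only [he2] at he
    exact smul_right_injective _ (inv_ne_zero hs'.ne') he
  have hsub : (fun y : Euc n => (1 - ⟪z, y⟫)⁻¹ • y) '' polarAt K 0 ⊆ polarAt K z := by
    rintro _ ⟨y, hy, rfl⟩ x hx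
    have hs : 0 < 1 - ⟪z, y⟫ := by linarith [hlt y hy]
    have := mem_polarAt_zero.1 hy x hx
    simp only [inner_smul_left, RCLike.conj_to_real]
    rw [inner_sub_right, inv_mul_le_iff₀ hs, real_inner_comm y z]
    linarith
  have hfin : volume (polarAt K z) ≠ ⊤ := (isBounded_polarAt hz).measure_lt_top.ne
  have hfin' : volume ((fun y : Euc n => (1 - ⟪z, y⟫)⁻¹ • y) '' polarAt K 0) ≠ ⊤ :=
    measure_ne_top_of_subset hsub hfin
  have hint := (integrableOn_image_iff_integrableOn_abs_det_fderiv_smul volume hm hf hinj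
    (fun _ => (1 : ℝ))).1 (integrableOn_const hfin')
  have heq := integral_image_eq_integral_abs_det_fderiv_smul volume hm hf hinj (fun _ => (1 : ℝ))
  have habs : ∀ y ∈ polarAt K 0, q y ≤ |(projDeriv z y).det| • (1 : ℝ) := by
    intro y hy
    rw [det_projDeriv (hlt y hy), smul_eq_mul, mul_one]
    exact (hle y hy).trans (le_abs_self _)
  have h1 := setIntegral_mono_on hq hint hm habs
  rw [← heq] at h1
  simp only [integral_const, MeasurableSet.univ, measureReal_restrict_apply, univ_inter,
    smul_eq_mul, mul_one] at h1
  exact h1.trans (measureReal_mono hsub hfin)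

/-! ### Lower bounds for the quadratic term -/

/-- A second-order Bernoulli inequality. -/
theorem bernoulli_inv {t M : ℝ} (ht : t < 1) (htM : -M ≤ t) (m : ℕ) :
    1 + m * t + m / (1 + M) * t ^ 2 ≤ ((1 - t)⁻¹) ^ m := by
  have hs : 0 < 1 - t := by linarith
  have h1 : 1 + t + t ^ 2 / (1 + M) ≤ (1 - t)⁻¹ := by
    have e : (1 - t)⁻¹ = 1 + t + t ^ 2 / (1 - t) := by field_simp; ring
    rw [e]
    gcongr
    linarith
  have h2 := one_add_mul_le_pow (a := (1 - t)⁻¹ - 1) (by have := inv_pos.2 hs; linarith) m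
  rw [add_sub_cancel] at h2
  refine le_trans ?_ h2
  have : (m : ℝ) * (t + t ^ 2 / (1 + M)) ≤ m * ((1 - t)⁻¹ - 1) := by
    gcongr
    linarith
  calc _ = 1 + (m : ℝ) * (t + t ^ 2 / (1 + M)) := by ring
    _ ≤ _ := by linarith

/-- The second moment of any set containing the unit ball is bounded below in the
direction `z`: the integrand is at least `‖z‖²/16` on a ball of radius `1/4`. -/
theorem second_moment_lower {n : ℕ} {S : Set (Euc n)} (hS : IsCompact S)
    (hball : closedBall 0 1 ⊆ S) (z : Euc n) :
    volume.real (ball (0 : Euc n) (1 / 4)) / 16 * ‖z‖ ^ 2 ≤ ∫ y in S, ⟪z, y⟫ ^ 2 := by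
  by_cases h0 : z = 0
  · subst h0; simp
  have hz0 : 0 < ‖z‖ := norm_pos_iff.2 h0
  set p : Euc n := (1 / 2 / ‖z‖) • z with hp
  have hpn : ‖p‖ = 1 / 2 := by
    rw [hp, norm_smul, Real.norm_of_nonneg (by positivity)]; field_simp
  have hsub : ball p (1 / 4) ⊆ S := by
    intro y hy
    apply hball
    rw [mem_ball, dist_eq_norm] at hy
    rw [mem_closedBall_zero_iff]
    have := norm_add_le (y - p) p
    rw [sub_add_cancel] at this
    linarith
  have hint : IntegrableOn (fun y : Euc n => ⟪z, y⟫ ^ 2) S :=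
    ContinuousOn.integrableOn_compact hS (by fun_prop)
  have hlow : ∀ y ∈ ball p (1 / 4), ‖z‖ ^ 2 / 16 ≤ ⟪z, y⟫ ^ 2 := by
    intro y hy
    rw [mem_ball, dist_eq_norm] at hy
    have h1 : ⟪z, p⟫ = ‖z‖ / 2 := by
      rw [hp, inner_smul_right, real_inner_self_eq_norm_sq]; field_simp
    have h2 : -(‖z‖ * ‖y - p‖) ≤ ⟪z, y - p⟫ := by
      linarith [(abs_le.1 (abs_real_inner_le_norm z (y - p))).1]
    have h3 : ‖z‖ * ‖y - p‖ ≤ ‖z‖ * (1 / 4) := by gcongr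
    rw [inner_sub_right, h1] at h2
    have h4 : ‖z‖ / 4 ≤ ⟪z, y⟫ := by linarith
    calc ‖z‖ ^ 2 / 16 = (‖z‖ / 4) ^ 2 := by ring
      _ ≤ _ := by gcongr
  have hb : volume.real (ball p (1 / 4)) = volume.real (ball (0 : Euc n) (1 / 4)) := by
    simp only [Measure.real, Measure.addHaar_ball_center]
  calc _ = ∫ y in ball p (1 / 4), ‖z‖ ^ 2 / 16 := by
        rw [setIntegral_const, hb, smul_eq_mul]; ring
    _ ≤ ∫ y in ball p (1 / 4), ⟪z, y⟫ ^ 2 :=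
        setIntegral_mono_on (integrableOn_const measure_ball_lt_top.ne) (hint.mono_set hsub)
          measurableSet_ball hlow
    _ ≤ _ := setIntegral_mono_set hint (Filter.Eventually.of_forall fun y => sq_nonneg _)
        hsub.eventuallyLE

/-! ### The regular simplex and its polar -/

theorem IsRegularSimplex.sum_eq_zero {n : ℕ} (hn : 0 < n) {v : Fin (n + 1) → Euc n}
    (hv : IsRegularSimplex v) : ∑ i, v i = 0 := by
  have hn' : (n : ℝ) ≠ 0 := by positivity
  have h : ∀ i, ⟪v i, ∑ j, v j⟫ = 0 := by
    intro i
    rw [inner_sum, ← Finset.add_sum_erase _ _ (Finset.mem_univ i),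
      Finset.sum_congr rfl (fun j hj => hv.2 i j (Finset.ne_of_mem_erase hj).symm),
      real_inner_self_eq_norm_sq, hv.1 i]
    simp
    field_simp
    ring
  rw [← inner_self_eq_zero (𝕜 := ℝ), sum_inner]
  exact Finset.sum_eq_zero fun i _ => h i

/-- The vertices of a regular simplex span: a vector orthogonal to all of them is zero,
because any `n` of them are linearly independent. -/
theorem IsRegularSimplex.eq_zero_of_inner {n : ℕ} (hn : 0 < n) {v : Fin (n + 1) → Euc n}
    (hv : IsRegularSimplex v) {y : Euc n} (hy : ∀ i, ⟪v i, y⟫ = 0) : y = 0 := by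
  have hn' : (n : ℝ) ≠ 0 := by positivity
  have hli : LinearIndependent ℝ (fun i : Fin n => v i.succ) := by
    rw [Fintype.linearIndependent_iff]
    intro g hg
    have h : ∀ i, g i * (1 + 1 / n) = 1 / n * ∑ j, g j := by
      intro i
      have h1 : ⟪v i.succ, ∑ j, g j • v j.succ⟫ = 0 := by rw [hg, inner_zero_right]
      rw [inner_sum, ← Finset.add_sum_erase _ _ (Finset.mem_univ i)] at h1
      have h2 : ∑ j ∈ Finset.univ.erase i, ⟪v i.succ, g j • v j.succ⟫ =
          ∑ j ∈ Finset.univ.erase i, -(1 / (n : ℝ)) * g j := by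
        refine Finset.sum_congr rfl fun j hj => ?_
        rw [inner_smul_right, hv.2 _ _ ((Fin.succ_injective n).ne (Finset.ne_of_mem_erase hj).symm)]
        ring
      rw [h2, ← Finset.mul_sum, inner_smul_right, real_inner_self_eq_norm_sq, hv.1] at h1
      rw [← Finset.add_sum_erase _ _ (Finset.mem_univ i)]
      linarith
    have hS : ∑ j, g j = 0 := by
      have h3 : ∑ i, g i * (1 + 1 / (n : ℝ)) = ∑ i : Fin n, 1 / (n : ℝ) * ∑ j, g j :=
        Finset.sum_congr rfl fun i _ => h i
      rw [← Finset.sum_mul, Finset.sum_const, Finset.card_univ, Fintype.card_fin, nsmul_eq_mul] at h3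
      field_simp at h3
      linarith
    intro i
    have h4 := h i
    rw [hS, mul_zero] at h4
    exact (mul_eq_zero.1 h4).resolve_right (by positivity)
  have hspan := hli.span_eq_top_of_card_eq_finrank' (by simp)
  have hmem : y ∈ Submodule.span ℝ (range fun i : Fin n => v i.succ) := by
    rw [hspan]; trivial
  rw [← inner_self_eq_zero (𝕜 := ℝ)]
  refine Submodule.span_induction (p := fun w _ => ⟪w, y⟫ = 0) ?_ (by simp) ?_ ?_ hmem
  · rintro _ ⟨i, rfl⟩; exact hy _
  · intro a b _ _ ha hb; rw [inner_add_left, ha, hb, add_zero]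
  · intro a b _ hb; simp [inner_smul_left, hb]

theorem mem_polarAt_simplexHull {n : ℕ} {v : Fin (n + 1) → Euc n} {y : Euc n} :
    y ∈ polarAt (simplexHull v) 0 ↔ ∀ i, ⟪y, v i⟫ ≤ 1 := by
  rw [mem_polarAt_zero]
  refine ⟨fun h i => h _ (subset_convexHull ℝ _ (mem_range_self i)), fun h => ?_⟩
  have : convexHull ℝ (range v) ⊆ {x | ⟪y, x⟫ ≤ 1} := by
    refine convexHull_min (by rintro _ ⟨i, rfl⟩; exact h i) ?_
    exact convex_halfSpace_le (innerₛₗ ℝ y).isLinear 1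
  exact this

theorem IsRegularSimplex.norm_le_one {n : ℕ} {v : Fin (n + 1) → Euc n}
    (hv : IsRegularSimplex v) {x : Euc n} (hx : x ∈ simplexHull v) : ‖x‖ ≤ 1 := by
  have : convexHull ℝ (range v) ⊆ closedBall 0 1 :=
    convexHull_min (by rintro _ ⟨i, rfl⟩; simp [hv.1 i]) (convex_closedBall _ _)
  simpa using this hx

theorem IsRegularSimplex.isBounded_polar {n : ℕ} (hn : 0 < n) {v : Fin (n + 1) → Euc n}
    (hv : IsRegularSimplex v) : Bornology.IsBounded (polarAt (simplexHull v) 0) := by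
  let L : Euc n →ₗ[ℝ] (Fin (n + 1) → ℝ) := LinearMap.pi fun i => innerₛₗ ℝ (v i)
  have hker : LinearMap.ker L = ⊥ := by
    rw [LinearMap.ker_eq_bot']
    intro y hy
    exact hv.eq_zero_of_inner hn fun i => by simpa [L] using congrFun hy i
  obtain ⟨k, -, hk⟩ := L.exists_antilipschitzWith hker
  refine (hk.isBounded_preimage
    (Metric.isBounded_closedBall (x := (0 : Fin (n + 1) → ℝ)) (r := n))).subset fun y hy => ?_
  rw [mem_polarAt_simplexHull] at hy
  have hn1 : (1 : ℝ) ≤ n := by exact_mod_cast hn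
  rw [mem_preimage, mem_closedBall_zero_iff, pi_norm_le_iff_of_nonneg (by positivity)]
  intro i
  have hsum : ∑ j, ⟪y, v j⟫ = 0 := by rw [← inner_sum, hv.sum_eq_zero hn, inner_zero_right]
  rw [← Finset.add_sum_erase _ _ (Finset.mem_univ i)] at hsum
  have hle : ∑ j ∈ Finset.univ.erase i, ⟪y, v j⟫ ≤ n := by
    refine (Finset.sum_le_card_nsmul _ _ 1 fun j _ => hy j).trans ?_
    simp
  have hi : L y i = ⟪y, v i⟫ := by simp [L, real_inner_comm]
  rw [hi, Real.norm_eq_abs, abs_le]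
  constructor
  · linarith
  · linarith [hy i]

/-- The polar of the regular simplex has its centroid at the origin: the reflection
exchanging `v i` and `v j` preserves the polar, so the first moments in all vertex
directions agree, while the vertices sum to zero. -/
theorem IsRegularSimplex.first_moment {n : ℕ} (hn : 0 < n) {v : Fin (n + 1) → Euc n}
    (hv : IsRegularSimplex v) {z : Euc n} (hz : z ∈ simplexHull v) :
    ∫ y in polarAt (simplexHull v) 0, ⟪z, y⟫ = 0 := by
  set S := polarAt (simplexHull v) 0 with hSdef
  have hS : IsCompact S :=
    Metric.isCompact_of_isClosed_isBounded (isClosed_polarAt _ _) (hv.isBounded_polar hn)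
  have hint : ∀ w : Euc n, IntegrableOn (fun y : Euc n => ⟪w, y⟫) S := fun w =>
    ContinuousOn.integrableOn_compact hS (by fun_prop)
  have hsymm : ∀ i j, ∫ y in S, ⟪v i, y⟫ = ∫ y in S, ⟪v j, y⟫ := by
    intro i j
    by_cases hij : i = j
    · rw [hij]
    let R := (Submodule.reflection (Submodule.span ℝ {v i - v j})ᗮ)
    have hRi : R (v i) = v j := Submodule.reflection_sub (by rw [hv.1, hv.1])
    have hRj : R (v j) = v i := by rw [← hRi]; exact Submodule.reflection_reflection _ _
    have hRk : ∀ k, k ≠ i → k ≠ j → R (v k) = v k := by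
      intro k hki hkj
      refine Submodule.reflection_mem_subspace_eq_self ?_
      rw [Submodule.mem_orthogonal_singleton_iff_inner_left, inner_sub_right,
        hv.2 k i hki, hv.2 k j hkj, sub_self]
    have hadj : ∀ a b, ⟪R a, b⟫ = ⟪a, R b⟫ := by
      intro a b
      rw [← R.inner_map_map a (R b)]
      congr 1
      exact (Submodule.reflection_reflection _ _).symm
    have hpre : R ⁻¹' S = S := by
      ext y
      rw [mem_preimage, hSdef, mem_polarAt_simplexHull, mem_polarAt_simplexHull]
      have hex : ∀ k, ∃ l, R (v k) = v l := by
        intro k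
        by_cases hki : k = i
        · exact ⟨j, by rw [hki, hRi]⟩
        by_cases hkj : k = j
        · exact ⟨i, by rw [hkj, hRj]⟩
        exact ⟨k, hRk k hki hkj⟩
      constructor
      · intro h k
        obtain ⟨l, hl⟩ := hex k
        have h1 := h l
        rw [← hl, R.inner_map_map] at h1
        exact h1
      · intro h k
        obtain ⟨l, hl⟩ := hex k
        rw [hadj, hl]
        exact h l
    have := R.measurePreserving.setIntegral_preimage_emb
      R.toHomeomorph.measurableEmbedding (fun y => ⟪v j, y⟫) S
    rw [hpre] at this
    rw [← this]
    refine integral_congr_ae (Filter.Eventually.of_forall fun y => ?_)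
    change ⟪v i, y⟫ = ⟪v j, R y⟫
    rw [← hadj, hRj]
  have hvert : ∀ i, ∫ y in S, ⟪v i, y⟫ = 0 := by
    intro i
    have h1 : ∑ j, ∫ y in S, ⟪v j, y⟫ = 0 := by
      rw [← integral_finsetSum _ fun j _ => hint (v j)]
      simp [← sum_inner, hv.sum_eq_zero hn]
    rw [Finset.sum_congr rfl fun j _ => hsymm j i, Finset.sum_const, Finset.card_univ,
      Fintype.card_fin, nsmul_eq_mul] at h1
    exact (mul_eq_zero.1 h1).resolve_left (by positivity)
  have : convexHull ℝ (range v) ⊆ {w | ∫ y in S, ⟪w, y⟫ = 0} := by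
    refine convexHull_min (by rintro _ ⟨i, rfl⟩; exact hvert i) ?_
    intro a ha b hb s t _ _ _
    simp only [mem_ofPred_eq] at ha hb ⊢
    simp only [inner_add_left, inner_smul_left, RCLike.conj_to_real]
    rw [integral_add ((hint a).const_mul s) ((hint b).const_mul t), integral_const_mul,
      integral_const_mul, ha, hb]
    simp
  exact this hz

/-! ### The first moment of the polar of a nearby body -/

/-- For a body between `(1 - δ)Δ` and `Δ` the first moment of the polar is `O(δ)`: the
polar contains `Δ°`, whose first moment vanishes, and exceeds it by a set of volume `O(δ)`. -/
theorem first_moment_lower {n : ℕ} (hn : 0 < n) {v : Fin (n + 1) → Euc n}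
    (hv : IsRegularSimplex v) {R : ℝ} (hR : ∀ y ∈ polarAt (simplexHull v) 0, ‖y‖ ≤ R)
    {δ : ℝ} (hδ0 : 0 < δ) (hδ : δ < 1 / (2 * n)) {K : Set (Euc n)}
    (h1 : (1 - δ) • simplexHull v ⊆ K) (h2 : K ⊆ simplexHull v)
    {z : Euc n} (hz : z ∈ simplexHull v) :
    (∀ y ∈ polarAt K 0, ‖y‖ ≤ 2 * R) ∧
    -(‖z‖ * (2 * R) * (volume.real (polarAt (simplexHull v) 0) * (2 * n * δ))) ≤
      ∫ y in polarAt K 0, ⟪z, y⟫ := by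
  set S := polarAt (simplexHull v) 0 with hSdef
  have hn1 : (1 : ℝ) ≤ n := by exact_mod_cast hn
  have hnδ : n * δ < 1 / 2 := by
    rw [lt_div_iff₀ (by positivity)] at hδ; linarith
  have hδ2 : δ < 1 / 2 := by nlinarith
  have hs : 0 < 1 - δ := by linarith
  have hSK : S ⊆ polarAt K 0 := fun y hy => by
    rw [hSdef, mem_polarAt_zero] at hy
    exact mem_polarAt_zero.2 fun x hx => hy x (h2 hx)
  have hKS : polarAt K 0 ⊆ (1 - δ)⁻¹ • S := fun y hy => by
    rw [mem_polarAt_zero] at hy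
    rw [mem_inv_smul_set_iff₀ hs.ne', hSdef, mem_polarAt_zero]
    intro x hx
    have := hy _ (h1 (smul_mem_smul_set hx))
    rwa [inner_smul_right, ← real_inner_smul_left] at this
  have hR0 : 0 ≤ R := by
    have := hR 0 (by rw [hSdef, mem_polarAt_zero]; simp)
    simpa using this
  have hinv : (1 - δ)⁻¹ ≤ 2 := by
    rw [inv_le_comm₀ hs (by norm_num)]; linarith
  have hKR : ∀ y ∈ polarAt K 0, ‖y‖ ≤ 2 * R := by
    intro y hy
    obtain ⟨w, hw, rfl⟩ := hKS hy
    simp only [norm_smul]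
    rw [Real.norm_of_nonneg (by positivity)]
    gcongr
    exact hR w hw
  refine ⟨hKR, ?_⟩
  have hSb := hv.isBounded_polar hn
  have hKc : IsCompact (polarAt K 0) := Metric.isCompact_of_isClosed_isBounded
    (isClosed_polarAt _ _) (isBounded_iff_forall_norm_le.2 ⟨_, hKR⟩)
  have hSm : MeasurableSet S := (isClosed_polarAt _ _).measurableSet
  have hKm : MeasurableSet (polarAt K 0) := (isClosed_polarAt _ _).measurableSet
  have hint : IntegrableOn (fun y : Euc n => ⟪z, y⟫) (polarAt K 0) :=
    ContinuousOn.integrableOn_compact hKc (by fun_prop)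
  have hsplit := setIntegral_sdiff hSm hint hSK
  have hdiff : ‖∫ y in polarAt K 0 \ S, ⟪z, y⟫‖ ≤
      (‖z‖ * (2 * R)) * volume.real (polarAt K 0 \ S) := by
    refine norm_setIntegral_le_of_norm_le_const
      ((measure_mono sdiff_subset).trans_lt hKc.measure_lt_top) fun y hy => ?_
    refine (norm_inner_le_norm z y).trans ?_
    gcongr
    exact hKR y hy.1
  have hvol : volume.real (polarAt K 0 \ S) ≤ volume.real S * (2 * n * δ) := by
    rw [measureReal_sdiff hSK hSm hKc.measure_lt_top.ne]
    have hle : volume.real (polarAt K 0) ≤ volume.real ((1 - δ)⁻¹ • S) :=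
      measureReal_mono hKS (hSb.smul₀ _).measure_lt_top.ne
    rw [Measure.real, Measure.real, Measure.addHaar_smul, ENNReal.toReal_mul,
      ENNReal.toReal_ofReal (abs_nonneg _)] at hle
    simp only [finrank_euclideanSpace, Fintype.card_fin] at hle
    rw [abs_of_pos (by positivity)] at hle
    have hbern := one_add_mul_le_pow (a := -δ) (by linarith) n
    have hpow : ((1 - δ)⁻¹) ^ n ≤ 1 + 2 * n * δ := by
      rw [inv_pow, inv_le_comm₀ (by positivity) (by positivity)]
      rw [← sub_eq_add_neg] at hbern
      refine le_trans ?_ hbern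
      rw [inv_le_iff_one_le_mul₀ (by positivity)]
      nlinarith [mul_pos (mul_pos (show (0 : ℝ) < n by positivity) hδ0) (sub_pos.2 hnδ)]
    have := mul_le_mul_of_nonneg_right hpow (measureReal_nonneg (μ := volume) (s := S))
    simp only [Measure.real] at this ⊢
    linarith
  rw [hv.first_moment hn hz, sub_zero] at hsplit
  rw [← hsplit]
  have h3 := (abs_le.1 hdiff).1
  have h4 : (‖z‖ * (2 * R)) * volume.real (polarAt K 0 \ S) ≤
      ‖z‖ * (2 * R) * (volume.real S * (2 * n * δ)) := by gcongr
  linarith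

/-! ### Stability of the polar volume -/

/-- For bodies close to the simplex, the polar volume at the Santaló point is at
least `vol(K°)(1 − cδ²)`; consequently
`P(K) = vol(K)·vol(K^{s(K)}) ≥ vol(K)·vol(K°)·(1 − cδ²)`. -/
theorem santalo_polar_volume_stability (n : ℕ) (hn : 0 < n)
    (v : Fin (n + 1) → Euc n) (hv : IsRegularSimplex v) :
    ∃ δ₀ > 0, ∃ c > 0, ∀ (δ : ℝ) (K : Set (Euc n)),
      0 < δ → δ < δ₀ → IsConvexBody K →
      (1 - δ) • simplexHull v ⊆ K → K ⊆ simplexHull v →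
      ∀ z : Euc n, IsSantaloPoint K z →
        (volume (polarAt K z)).toReal ≥
          (volume (polarAt K 0)).toReal * (1 - c * δ ^ 2) ∧
        volProd K = (volume K).toReal * (volume (polarAt K z)).toReal ∧
        volProd K ≥
          (volume K).toReal * (volume (polarAt K 0)).toReal * (1 - c * δ ^ 2) := by
  set S := polarAt (simplexHull v) 0 with hSdef
  have hSb : Bornology.IsBounded S := hv.isBounded_polar hn
  obtain ⟨R, hR⟩ := isBounded_iff_forall_norm_le.1 hSb
  have hballS : closedBall 0 1 ⊆ S := by
    intro y hy
    rw [mem_closedBall_zero_iff] at hy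
    rw [hSdef, mem_polarAt_simplexHull]
    intro i
    refine (real_inner_le_norm _ _).trans ?_
    rw [hv.1 i, mul_one]
    exact hy
  have hR0 : 0 ≤ R := by simpa using hR 0 (hballS (by simp))
  have hV0 : 0 < volume.real S :=
    (ENNReal.toReal_pos (measure_ball_pos volume (0 : Euc n) one_pos).ne'
      measure_ball_lt_top.ne).trans_le
      (measureReal_mono (ball_subset_closedBall.trans hballS) hSb.measure_lt_top.ne)
  have hb0 : 0 < volume.real (ball (0 : Euc n) (1 / 4)) :=
    ENNReal.toReal_pos (measure_ball_pos volume (0 : Euc n) (by norm_num)).ne'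
      measure_ball_lt_top.ne
  -- `vol(K^z) ≥ vol(K°) - A δ ‖z‖ + B ‖z‖²`, and completing the square removes `‖z‖`.
  obtain ⟨A, hA⟩ : ∃ A : ℝ, A = ((n + 1 : ℕ) : ℝ) * (2 * R * (volume.real S * (2 * n))) := ⟨_, rfl⟩
  obtain ⟨B, hB⟩ : ∃ B : ℝ, B = ((n + 1 : ℕ) : ℝ) / (1 + 2 * R) *
    (volume.real (ball (0 : Euc n) (1 / 4)) / 16) := ⟨_, rfl⟩
  have hB0 : 0 < B := by rw [hB]; positivity
  refine ⟨1 / (2 * n), by positivity, A ^ 2 / (4 * B * volume.real S) + 1, by positivity, ?_⟩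
  intro δ K hδ0 hδ hK h1 h2 z hz
  have hzΔ : z ∈ simplexHull v := h2 (interior_subset hz.1)
  obtain ⟨hKR, hmom⟩ := first_moment_lower hn hv hR hδ0 hδ h1 h2 hzΔ
  have hKc : IsCompact (polarAt K 0) := Metric.isCompact_of_isClosed_isBounded
    (isClosed_polarAt _ _) (isBounded_iff_forall_norm_le.2 ⟨_, hKR⟩)
  have hSK : S ⊆ polarAt K 0 := fun y hy => by
    rw [hSdef, mem_polarAt_zero] at hy
    exact mem_polarAt_zero.2 fun x hx => hy x (h2 hx)
  have hVK : volume.real S ≤ volume.real (polarAt K 0) :=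
    measureReal_mono hSK hKc.measure_lt_top.ne
  have hsec := second_moment_lower hKc (hballS.trans hSK) z
  have hi0 : IntegrableOn (fun _ : Euc n => (1 : ℝ)) (polarAt K 0) :=
    integrableOn_const hKc.measure_lt_top.ne
  have hi1 : IntegrableOn (fun y : Euc n => ((n + 1 : ℕ) : ℝ) * ⟪z, y⟫) (polarAt K 0) :=
    ContinuousOn.integrableOn_compact hKc (by fun_prop)
  have hi2 : IntegrableOn
      (fun y : Euc n => ((n + 1 : ℕ) : ℝ) / (1 + 2 * R) * ⟪z, y⟫ ^ 2) (polarAt K 0) :=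
    ContinuousOn.integrableOn_compact hKc (by fun_prop)
  have hlow := setIntegral_le_volume_polarAt hz.1
    (fun y => 1 + ((n + 1 : ℕ) : ℝ) * ⟪z, y⟫ + ((n + 1 : ℕ) : ℝ) / (1 + 2 * R) * ⟪z, y⟫ ^ 2)
    ((hi0.add hi1).add hi2) (by
      intro y hy
      refine bernoulli_inv (inner_lt_one_of_mem_polarAt hz.1 hy) ?_ (n + 1)
      have h3 := (abs_le.1 (abs_real_inner_le_norm z y)).1
      have h4 : ‖z‖ * ‖y‖ ≤ 1 * (2 * R) := by
        gcongr
        · exact hv.norm_le_one hzΔ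
        · exact hKR y hy
      linarith)
  rw [integral_add (by exact hi0.add hi1) hi2, integral_add hi0 hi1, integral_const_mul,
    integral_const_mul] at hlow
  simp only [integral_const, MeasurableSet.univ, measureReal_restrict_apply, univ_inter,
    smul_eq_mul, mul_one] at hlow
  have hfirst : -(A * δ * ‖z‖) ≤ ((n + 1 : ℕ) : ℝ) * ∫ y in polarAt K 0, ⟪z, y⟫ := by
    refine le_trans (le_of_eq ?_) (mul_le_mul_of_nonneg_left hmom (Nat.cast_nonneg (n + 1)))
    rw [hA]; ring
  have hsecond : B * ‖z‖ ^ 2 ≤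
      ((n + 1 : ℕ) : ℝ) / (1 + 2 * R) * ∫ y in polarAt K 0, ⟪z, y⟫ ^ 2 := by
    rw [hB, mul_assoc]
    gcongr
  have hsq : -(A ^ 2 * δ ^ 2 / (4 * B)) ≤ B * ‖z‖ ^ 2 - A * δ * ‖z‖ := by
    have e : B * ‖z‖ ^ 2 - A * δ * ‖z‖ + A ^ 2 * δ ^ 2 / (4 * B) =
        B * (‖z‖ - A * δ / (2 * B)) ^ 2 := by
      field_simp
      ring
    have : 0 ≤ B * (‖z‖ - A * δ / (2 * B)) ^ 2 := by positivity
    linarith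
  have hmain : (volume (polarAt K z)).toReal ≥ (volume (polarAt K 0)).toReal *
      (1 - (A ^ 2 / (4 * B * volume.real S) + 1) * δ ^ 2) := by
    have h5 : A ^ 2 * δ ^ 2 / (4 * B) ≤
        volume.real (polarAt K 0) * ((A ^ 2 / (4 * B * volume.real S) + 1) * δ ^ 2) := by
      calc A ^ 2 * δ ^ 2 / (4 * B) = volume.real S * (A ^ 2 / (4 * B * volume.real S) * δ ^ 2) := by
            field_simp
        _ ≤ _ := by gcongr; linarith
    change (volume (polarAt K z)).toReal ≥ volume.real (polarAt K 0) * _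
    linarith
  have hvp : volProd K = (volume K).toReal * (volume (polarAt K z)).toReal := by
    refine IsLeast.csInf_eq ⟨⟨z, hz.1, rfl⟩, ?_⟩
    rintro _ ⟨w, hw, rfl⟩
    exact mul_le_mul_of_nonneg_left
      (ENNReal.toReal_mono (isBounded_polarAt hw).measure_lt_top.ne (hz.2 w hw))
      ENNReal.toReal_nonneg
  refine ⟨hmain, hvp, ?_⟩
  rw [hvp, ge_iff_le, mul_assoc]
  exact mul_le_mul_of_nonneg_left hmain ENNReal.toReal_nonneg
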